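/- Let 0 < α < 1, t > 0 and x > 0. Then the function ξ ↦ E_α((1−ξ²) t^α) cos(xξ) is integrable on (0,∞), the alternating series ∑_{k=0}^∞ (−1)^k a_k(x,t) converges, and ∫_0^∞ E_α((1−ξ²) t^α) cos(xξ) dξ = ∑_{k=0}^∞ (−1)^k a_k(x,t). -/

import Mathlib

open Real MeasureTheory

/-- The Mittag-Leffler function `E_α(r) = ∑ r^k / Γ(1+kα)`. -/
noncomputable def mittagLeffler (α r : ℝ) : ℝ :=
  ∑' k : ℕ, r ^ k / Real.Gamma (1 + k * α)

/-- The coefficients `a_k(x,t)` obtained by splitting the Fourier integral of the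
fundamental solution over the intervals where `cos (xξ)` has a fixed sign. -/
noncomputable def aCoeff (α t x : ℝ) (k : ℕ) : ℝ :=
  if k = 0 then
    ∫ ξ in (0 : ℝ)..(π / (2 * x)),
      mittagLeffler α ((1 - ξ ^ 2) * t ^ α) * Real.cos (x * ξ)
  else
    (-1 : ℝ) ^ k *
      ∫ ξ in (π * (2 * (k : ℝ) - 1) / (2 * x))..(π * (2 * (k : ℝ) + 1) / (2 * x)),
        mittagLeffler α ((1 - ξ ^ 2) * t ^ α) * Real.cos (x * ξ)

/-!
For `0 < α ≤ 1` the function `u(s) = E_α(-s^α)` solves the Abel–Volterra equation `u = 1 - k * u`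
with `k(s) = s^(α-1) / Γ(α)`, and `u' = -v` where `v(s) = s^(α-1) E_{α,α}(-s^α)` solves
`v = k - k * v`. As `k` is log-convex, `v` cannot have a first zero, so `v > 0` and `u` decreases.
Bounding `u` from below by `u(t)` in the convolution gives `u(t) (1 + t^α / Γ(α+1)) ≤ 1`, that is
`0 < E_α(-r) ≤ 1 / (1 + r / Γ(α+1))`. Hence `E_α((1-ξ²) t^α)` is `O(1/ξ²)`, the integral converges
absolutely, and the partial sums of the series are its truncations at the zeros of `cos (xξ)`.
-/

open Set Filter Topology

/-! ### Volterra equations -/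

lemma forall_pos_of_continuousOn_Ioi {v : ℝ → ℝ} {a : ℝ} (hv : ContinuousOn v (Ioi a))
    (hnear : ∀ᶠ s in 𝓝[>] a, 0 < v s)
    (hstep : ∀ t, a < t → (∀ s ∈ Ioo a t, 0 < v s) → 0 < v t) {t : ℝ} (ht : a < t) :
    0 < v t := by
  obtain ⟨ε, hε, hpos⟩ := mem_nhdsGT_iff_exists_Ioo_subset.1 hnear
  have ε_le {s : ℝ} (hs : a < s) (hvs : v s ≤ 0) : ε ≤ s :=
    le_of_not_gt fun hsε => hvs.not_gt (hpos ⟨hs, hsε⟩)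
  by_contra! hle
  have hclosed : IsClosed (Icc ε t ∩ v ⁻¹' Iic 0) :=
    (hv.mono fun s hs => hε.out.trans_le hs.1).preimage_isClosed_of_isClosed isClosed_Icc
      isClosed_Iic
  obtain ⟨z, ⟨hz, hvz⟩, hfirst⟩ :=
    (isCompact_Icc.of_isClosed_subset hclosed inter_subset_left).exists_isLeast
      ⟨t, ⟨ε_le ht hle, le_rfl⟩, hle⟩
  refine (hstep z (hε.out.trans_le hz.1) fun s hs => ?_).not_ge hvz
  by_contra! hvs
  exact hs.2.not_ge (hfirst ⟨⟨ε_le hs.1 hvs, hs.2.le.trans hz.2⟩, hvs⟩)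

lemma tendsto_integral_sub_nhdsLT {E : Type*} [NormedAddCommGroup E] [NormedSpace ℝ E] {k : ℝ → E}
    {t : ℝ} (ht : 0 < t) (hk : IntervalIntegrable k volume 0 t) :
    Tendsto (fun r => ∫ s in 0..t - r, k s) (𝓝[<] t) (𝓝 0) := by
  have hcont := intervalIntegral.continuousOn_primitive_interval' hk left_mem_uIcc
  rw [uIcc_of_le ht.le] at hcont
  have hzero := hcont 0 (left_mem_Icc.2 ht.le)
  simp only [ContinuousWithinAt, intervalIntegral.integral_same] at hzero
  refine hzero.comp (tendsto_nhdsWithin_iff.2 ⟨?_, ?_⟩)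
  · exact ((continuous_const.sub continuous_id).tendsto' t 0 (sub_self t)).mono_left
      nhdsWithin_le_nhds
  · filter_upwards [Ioo_mem_nhdsLT ht] with r hr
    exact ⟨sub_nonneg.2 hr.2.le, sub_le_self t hr.1.le⟩

/-- `v` is a continuous solution on `(0, ∞)` of the Volterra equation `v = g - k * v`, where
`(k * v) t = ∫₀ᵗ k (t - s) v s ds`. Nothing is required at `0`, where `k`, `g` and `v` may be
singular; the integrability field keeps the convolution from being a junk `0`. -/
structure IsVolterraSolution (k g v : ℝ → ℝ) : Prop where
  continuousOn : ContinuousOn v (Ioi 0)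
  intervalIntegrable : ∀ t, 0 < t → IntervalIntegrable (fun s => k (t - s) * v s) volume 0 t
  eq_sub_integral : ∀ t, 0 < t → v t = g t - ∫ s in 0..t, k (t - s) * v s

namespace IsVolterraSolution

variable {k g v : ℝ → ℝ} {t t₀ t₁ : ℝ}

lemma div_mul_le_add_integral (h : IsVolterraSolution k g v) (hg : ∀ t, 0 < t → 0 < g t)
    (hkg : ∀ s, 0 < s → AntitoneOn (fun t => k (t - s) / g t) (Ioi s))
    (ht₀ : 0 < t₀) (hle : t₀ ≤ t₁) (hv : ∀ s ∈ Ioo 0 t₀, 0 ≤ v s) :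
    g t₁ / g t₀ * v t₀ ≤ v t₁ + ∫ s in t₀..t₁, k (t₁ - s) * v s := by
  have ht₁ := ht₀.trans_le hle
  have hint := h.intervalIntegrable t₁ ht₁
  have hint_left := hint.mono_set (uIcc_subset_uIcc_left (mem_uIcc_of_le ht₀.le hle))
  have hint_right := hint.mono_set (uIcc_subset_uIcc_right (mem_uIcc_of_le ht₀.le hle))
  have hold : ∫ s in 0..t₀, k (t₁ - s) * v s
      ≤ g t₁ / g t₀ * ∫ s in 0..t₀, k (t₀ - s) * v s := by
    rw [← intervalIntegral.integral_const_mul]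
    refine intervalIntegral.integral_mono_on_of_le_Ioo ht₀.le hint_left
      ((h.intervalIntegrable t₀ ht₀).const_mul _) fun s hs => ?_
    have hratio := hkg s hs.1 hs.2 (hs.2.trans_le hle) hle
    rw [div_le_iff₀ (hg t₁ ht₁)] at hratio
    calc k (t₁ - s) * v s ≤ k (t₀ - s) / g t₀ * g t₁ * v s :=
          mul_le_mul_of_nonneg_right hratio (hv s hs)
      _ = g t₁ / g t₀ * (k (t₀ - s) * v s) := by ring
  have hcancel : g t₁ / g t₀ * g t₀ = g t₁ := div_mul_cancel₀ _ (hg t₀ ht₀).ne'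
  rw [h.eq_sub_integral t₀ ht₀, h.eq_sub_integral t₁ ht₁,
    ← intervalIntegral.integral_add_adjacent_intervals hint_left hint_right, mul_sub, hcancel]
  linarith

lemma integral_mul_le_of_forall_le (h : IsVolterraSolution k g v) (hk : ∀ s, 0 < s → 0 ≤ k s)
    (hki : ∀ t, 0 < t → IntervalIntegrable k volume 0 t) (ht₀ : 0 < t₀) (hlt : t₀ < t₁) {m : ℝ}
    (hm : ∀ s ∈ Ioo t₀ t₁, v s ≤ m) :
    ∫ s in t₀..t₁, k (t₁ - s) * v s ≤ (∫ s in 0..t₁ - t₀, k s) * m := by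
  have hsub : ∫ s in t₀..t₁, k (t₁ - s) = ∫ s in 0..t₁ - t₀, k s := by
    rw [intervalIntegral.integral_comp_sub_left, sub_self]
  have hksub : IntervalIntegrable (fun s => k (t₁ - s)) volume t₀ t₁ := by
    simpa using ((hki (t₁ - t₀) (sub_pos.2 hlt)).comp_sub_left t₁).symm
  rw [← hsub, ← intervalIntegral.integral_mul_const]
  refine intervalIntegral.integral_mono_on_of_le_Ioo hlt.le
    ((h.intervalIntegrable t₁ (ht₀.trans hlt)).mono_set
      (uIcc_subset_uIcc_right (mem_uIcc_of_le ht₀.le hlt.le)))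
    (hksub.mul_const _) fun s hs => ?_
  exact mul_le_mul_of_nonneg_left (hm s hs) (hk _ (sub_pos.2 hs.2))

lemma pos_of_forall_pos (h : IsVolterraSolution k g v) (hk : ∀ s, 0 < s → 0 ≤ k s)
    (hki : ∀ t, 0 < t → IntervalIntegrable k volume 0 t) (hg : ∀ t, 0 < t → 0 < g t)
    (hgc : ContinuousOn g (Ioi 0))
    (hkg : ∀ s, 0 < s → AntitoneOn (fun t => k (t - s) / g t) (Ioi s))
    (ht : 0 < t) (hpos : ∀ s ∈ Ioo 0 t, 0 < v s) : 0 < v t := by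
  by_contra! hle
  -- Close to `t` the kernel has too little mass left to bring `v` from its maximum `v t₀` to `0`.
  have hsmall : ∀ᶠ r in 𝓝[<] t, (∫ s in 0..t - r, k s) * g r < g t := by
    have hgt : Tendsto g (𝓝[<] t) (𝓝 (g t)) :=
      (hgc.continuousAt (Ioi_mem_nhds ht)).mono_left nhdsWithin_le_nhds
    refine ((tendsto_integral_sub_nhdsLT ht (hki t ht)).mul hgt).eventually_lt_const ?_
    simpa only [zero_mul] using hg t ht
  obtain ⟨a, ⟨ha, hat⟩, hsmall⟩ := (mem_nhdsLT_iff_exists_mem_Ico_Ioo_subset ht).1 hsmall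
  obtain ⟨b, hab, hbt⟩ := exists_between hat
  have hb : 0 < b := ha.trans_lt hab
  obtain ⟨t₀, ⟨hbt₀, ht₀t⟩, hmax⟩ := isCompact_Icc.exists_isMaxOn (nonempty_Icc.2 hbt.le)
    (h.continuousOn.mono fun s hs => hb.trans_le hs.1)
  have hmax_pos : 0 < v t₀ := (hpos b ⟨hb, hbt⟩).trans_le (hmax (left_mem_Icc.2 hbt.le))
  have ht₀ : 0 < t₀ := hb.trans_le hbt₀
  have hlt : t₀ < t := ht₀t.lt_of_ne (by rintro rfl; exact hle.not_gt hmax_pos)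
  have hlower := h.div_mul_le_add_integral hg hkg ht₀ hlt.le
    fun s hs => (hpos s ⟨hs.1, hs.2.trans hlt⟩).le
  have hupper := h.integral_mul_le_of_forall_le hk hki ht₀ hlt
    fun s hs => hmax ⟨hbt₀.trans hs.1.le, hs.2.le⟩
  have hratio : ∫ s in 0..t - t₀, k s < g t / g t₀ :=
    (lt_div_iff₀ (hg t₀ ht₀)).2 (hsmall ⟨hab.trans_le hbt₀, hlt⟩)
  have := mul_lt_mul_of_pos_right hratio hmax_pos
  linarith

theorem pos (h : IsVolterraSolution k g v) (hk : ∀ s, 0 < s → 0 ≤ k s)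
    (hki : ∀ t, 0 < t → IntervalIntegrable k volume 0 t) (hg : ∀ t, 0 < t → 0 < g t)
    (hgc : ContinuousOn g (Ioi 0))
    (hkg : ∀ s, 0 < s → AntitoneOn (fun t => k (t - s) / g t) (Ioi s))
    (hnear : ∀ᶠ s in 𝓝[>] 0, 0 < v s) (ht : 0 < t) : 0 < v t :=
  forall_pos_of_continuousOn_Ioi h.continuousOn hnear
    (fun _ hr hpos => h.pos_of_forall_pos hk hki hg hgc hkg hr hpos) ht

lemma integral_mul_le_sub (h : IsVolterraSolution k g v) (hk : ∀ s, 0 < s → 0 ≤ k s)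
    (hki : IntervalIntegrable k volume 0 t) (hv : AntitoneOn v (Ioi 0)) (ht : 0 < t) :
    (∫ s in 0..t, k s) * v t ≤ g t - v t := by
  have hsub : ∫ s in 0..t, k (t - s) = ∫ s in 0..t, k s := by
    rw [intervalIntegral.integral_comp_sub_left, sub_self, sub_zero]
  have hksub : IntervalIntegrable (fun s => k (t - s)) volume 0 t := by
    simpa using (hki.comp_sub_left t).symm
  have hconv : (∫ s in 0..t, k s) * v t ≤ ∫ s in 0..t, k (t - s) * v s := by
    rw [← hsub, ← intervalIntegral.integral_mul_const]
    refine intervalIntegral.integral_mono_on_of_le_Ioo ht.le (hksub.mul_const _)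
      (h.intervalIntegrable t ht) fun s hs => ?_
    exact mul_le_mul_of_nonneg_left (hv hs.1 ht hs.2.le) (hk _ (sub_pos.2 hs.2))
  linarith [h.eq_sub_integral t ht]

end IsVolterraSolution

/-! ### Abel kernels -/

/-- The kernel `s^(b-1) / Γ(b)` of the Riemann–Liouville fractional integral of order `b`. The
kernels with `b > 0` form a convolution semigroup on `(0, ∞)`. -/
noncomputable def abelKernel (b s : ℝ) : ℝ := s ^ (b - 1) / Gamma b

section AbelKernel

variable {a b t : ℝ}

lemma abelKernel_one (s : ℝ) : abelKernel 1 s = 1 := by simp [abelKernel]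

lemma abelKernel_pos (hb : 0 < b) (ht : 0 < t) : 0 < abelKernel b t :=
  div_pos (rpow_pos_of_pos ht _) (Gamma_pos_of_pos hb)

lemma intervalIntegrable_abelKernel (hb : 0 < b) (c d : ℝ) :
    IntervalIntegrable (abelKernel b) volume c d :=
  (intervalIntegral.intervalIntegrable_rpow' (by linarith)).div_const _

lemma continuousOn_abelKernel : ContinuousOn (abelKernel b) (Ioi 0) :=
  (continuousOn_id.rpow_const fun _ hs => Or.inl (ne_of_gt hs)).div_const _

lemma antitoneOn_abelKernel_sub_div_abelKernel {α s : ℝ} (hα : 0 < α) (hα1 : α ≤ 1) (hb : α ≤ b)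
    (hs : 0 < s) : AntitoneOn (fun t => abelKernel α (t - s) / abelKernel b t) (Ioi s) := by
  have hform {t : ℝ} (ht : s < t) : abelKernel α (t - s) / abelKernel b t
      = Gamma b / Gamma α * ((1 - s / t) ^ (α - 1) * t ^ (α - b)) := by
    have ht0 : 0 < t := hs.trans ht
    have hone : 1 - s / t = (t - s) / t := by field_simp
    rw [hone, div_rpow (sub_nonneg.2 ht.le) ht0.le, show α - b = (α - 1) - (b - 1) by ring,
      rpow_sub ht0 (α - 1) (b - 1), div_mul_div_cancel₀ (rpow_pos_of_pos ht0 _).ne',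
      abelKernel, abelKernel, div_div_div_eq]
    ring
  intro t₀ (ht₀ : s < t₀) t₁ (ht₁ : s < t₁) hle
  have ht₀0 : 0 < t₀ := hs.trans ht₀
  have hbase : 0 < 1 - s / t₀ := sub_pos.2 ((div_lt_one ht₀0).2 ht₀)
  have hΓα := Gamma_pos_of_pos hα
  have hΓb := Gamma_pos_of_pos (hα.trans_le hb)
  simp only [hform ht₀, hform ht₁]
  refine mul_le_mul_of_nonneg_left (mul_le_mul ?_ ?_ ?_ ?_) (div_pos hΓb hΓα).le
  · exact rpow_le_rpow_of_nonpos hbase (by gcongr) (by linarith)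
  · exact rpow_le_rpow_of_nonpos ht₀0 hle (by linarith)
  · exact rpow_nonneg (ht₀0.le.trans hle) _
  · exact rpow_nonneg hbase.le _

lemma integral_rpow_mul_sub_rpow (ha : 0 < a) (hb : 0 < b) (ht : 0 < t) :
    ∫ s in 0..t, s ^ (b - 1) * (t - s) ^ (a - 1)
      = t ^ (b + a - 1) * ProbabilityTheory.beta b a := by
  have hbeta := Complex.betaIntegral_scaled b a ht
  rw [Complex.betaIntegral_eq_Gamma_mul_div _ _ (by simpa) (by simpa)] at hbeta
  apply Complex.ofReal_injective
  rw [← intervalIntegral.integral_ofReal, ProbabilityTheory.beta]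
  push_cast [Complex.ofReal_cpow ht.le, ← Complex.Gamma_ofReal]
  rw [← hbeta]
  refine intervalIntegral.integral_congr fun s hs => ?_
  rw [uIcc_of_le ht.le] at hs
  simp only [Complex.ofReal_cpow hs.1, Complex.ofReal_cpow (sub_nonneg.2 hs.2), Complex.ofReal_sub,
    Complex.ofReal_one]

lemma integral_abelKernel_mul_abelKernel (ha : 0 < a) (hb : 0 < b) (ht : 0 < t) :
    ∫ s in 0..t, abelKernel a (t - s) * abelKernel b s = abelKernel (a + b) t := by
  have hΓa := (Gamma_pos_of_pos ha).ne'
  have hΓb := (Gamma_pos_of_pos hb).ne'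
  calc ∫ s in 0..t, abelKernel a (t - s) * abelKernel b s
      = ∫ s in 0..t, (Gamma a * Gamma b)⁻¹ * (s ^ (b - 1) * (t - s) ^ (a - 1)) := by
        congr 1 with s
        simp only [abelKernel]
        field_simp
    _ = abelKernel (a + b) t := by
        rw [intervalIntegral.integral_const_mul, integral_rpow_mul_sub_rpow ha hb ht,
          ProbabilityTheory.beta, abelKernel, add_comm b a]
        field_simp

lemma intervalIntegrable_abelKernel_mul_abelKernel (ha : 0 < a) (hb : 0 < b) (ht : 0 < t) :
    IntervalIntegrable (fun s => abelKernel a (t - s) * abelKernel b s) volume 0 t := by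
  refine intervalIntegral.intervalIntegrable_of_integral_ne_zero ?_
  rw [integral_abelKernel_mul_abelKernel ha hb ht]
  exact (abelKernel_pos (add_pos ha hb) ht).ne'

lemma integral_abelKernel (hb : 0 < b) (ht : 0 < t) :
    ∫ s in 0..t, abelKernel b s = abelKernel (1 + b) t := by
  simpa only [abelKernel_one, one_mul] using integral_abelKernel_mul_abelKernel one_pos hb ht

end AbelKernel

/-! ### The two-parameter Mittag-Leffler function -/

/-- The two-parameter Mittag-Leffler function `E_{α,b}(r) = ∑ r^k / Γ(b+kα)`; its case `b = 1` is
`mittagLeffler α`, and `b = α` appears in the derivative of `s ↦ E_α(-s^α)`. -/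
noncomputable def mittagLefflerTwo (α b r : ℝ) : ℝ :=
  ∑' k : ℕ, r ^ k / Gamma (b + k * α)

lemma rpow_mul_exp_neg_le_Gamma {M y : ℝ} (hM : 0 ≤ M) (hy : 1 ≤ y) :
    M ^ (y - 1) * exp (-M) ≤ Gamma y := by
  have hint := GammaIntegral_convergent (zero_lt_one.trans_le hy)
  have hsub : Ioi M ⊆ Ioi 0 := Ioi_subset_Ioi hM
  rw [Gamma_eq_integral (zero_lt_one.trans_le hy)]
  calc M ^ (y - 1) * exp (-M) = ∫ s in Ioi M, exp (-s) * M ^ (y - 1) := by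
        rw [integral_mul_const, integral_exp_neg_Ioi, mul_comm]
    _ ≤ ∫ s in Ioi M, exp (-s) * s ^ (y - 1) := by
        refine setIntegral_mono_on ((integrableOn_exp_neg_Ioi M).mul_const _)
          (hint.mono_set hsub) measurableSet_Ioi fun s (hs : M < s) => ?_
        have : 0 ≤ y - 1 := by linarith
        gcongr
    _ ≤ ∫ s in Ioi 0, exp (-s) * s ^ (y - 1) := by
        refine setIntegral_mono_set hint ?_ hsub.eventuallyLE
        filter_upwards [ae_restrict_mem measurableSet_Ioi] with s (hs : 0 < s)
        positivity

section MittagLefflerTwo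

variable {α b : ℝ}

lemma summable_pow_div_Gamma (hα : 0 < α) (b r : ℝ) :
    Summable fun k : ℕ => r ^ k / Gamma (b + k * α) := by
  obtain ⟨M, hM, hrM⟩ : ∃ M : ℝ, 0 < M ∧ |r| < M ^ α :=
    ((eventually_gt_atTop 0).and ((tendsto_rpow_atTop hα).eventually_gt_atTop |r|)).exists
  have hgeom : Summable fun k : ℕ => exp M * M ^ (1 - b) * (|r| / M ^ α) ^ k :=
    (summable_geometric_of_lt_one (by positivity) ((div_lt_one (by positivity)).2 hrM)).mul_left _
  refine hgeom.of_norm_bounded_eventually_nat ?_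
  have hlarge : Tendsto (fun k : ℕ => b + k * α) atTop atTop :=
    tendsto_atTop_add_const_left _ _ (tendsto_natCast_atTop_atTop.atTop_mul_const hα)
  filter_upwards [hlarge.eventually_ge_atTop 1] with k hk
  have hΓ := rpow_mul_exp_neg_le_Gamma hM.le hk
  rw [norm_div, norm_pow, norm_eq_abs, norm_of_nonneg (Gamma_nonneg_of_nonneg (by linarith))]
  calc |r| ^ k / Gamma (b + k * α) ≤ |r| ^ k / (M ^ (b + k * α - 1) * exp (-M)) := by gcongr
    _ = exp M * M ^ (1 - b) * (|r| / M ^ α) ^ k := by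
        rw [show b + k * α - 1 = α * k - (1 - b) by ring, rpow_sub hM, rpow_mul hM.le,
          rpow_natCast, exp_neg, div_pow]
        field_simp

lemma continuous_mittagLefflerTwo (hα : 0 < α) : Continuous (mittagLefflerTwo α b) := by
  refine continuous_iff_continuousAt.2 fun r => ?_
  refine ContinuousOn.continuousAt (s := Icc (-(|r| + 1)) (|r| + 1)) ?_
    (Icc_mem_nhds (by linarith [neg_abs_le r]) (by linarith [le_abs_self r]))
  refine continuousOn_tsum (fun k => by fun_prop) (summable_pow_div_Gamma hα b (|r| + 1)).norm
    fun k s hs => ?_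
  rw [norm_div, norm_div, norm_pow, norm_pow, norm_of_nonneg (by positivity : 0 ≤ |r| + 1)]
  gcongr
  exact abs_le.2 hs

lemma mittagLefflerTwo_zero : mittagLefflerTwo α b 0 = (Gamma b)⁻¹ := by
  rw [mittagLefflerTwo, tsum_eq_single 0 fun k hk => by simp [hk]]
  simp

lemma continuous_mittagLeffler (hα : 0 < α) : Continuous (mittagLeffler α) :=
  continuous_mittagLefflerTwo hα

end MittagLefflerTwo

/-! ### Fractional relaxation -/

/-- The function `s^(b-1) E_{α,b}(-s^α)`, which solves the fractional relaxation equation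
`v = abelKernel b - abelKernel α * v`. -/
noncomputable def fracRelaxation (α b s : ℝ) : ℝ := s ^ (b - 1) * mittagLefflerTwo α b (-s ^ α)

section FracRelaxation

variable {a α b t : ℝ}

lemma fracRelaxation_one : fracRelaxation α 1 t = mittagLeffler α (-t ^ α) := by
  simp [fracRelaxation, mittagLefflerTwo, mittagLeffler]

lemma continuous_mittagLefflerTwo_neg_rpow (hα : 0 < α) :
    Continuous fun s : ℝ => mittagLefflerTwo α b (-s ^ α) :=
  (continuous_mittagLefflerTwo hα).comp (continuous_rpow_const hα.le).neg

lemma continuousOn_fracRelaxation (hα : 0 < α) :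
    ContinuousOn (fracRelaxation α b) (Ioi 0) :=
  (continuousOn_id.rpow_const fun _ hs => Or.inl (ne_of_gt hs)).mul
    (continuous_mittagLefflerTwo_neg_rpow hα).continuousOn

lemma eventually_fracRelaxation_pos (hα : 0 < α) (hb : 0 < b) :
    ∀ᶠ s in 𝓝[>] 0, 0 < fracRelaxation α b s := by
  have hzero : 0 < mittagLefflerTwo α b (-(0 : ℝ) ^ α) := by
    rw [zero_rpow hα.ne', neg_zero, mittagLefflerTwo_zero]
    exact inv_pos.2 (Gamma_pos_of_pos hb)
  have hnear := (continuous_mittagLefflerTwo_neg_rpow hα).continuousAt.eventually_const_lt hzero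
  filter_upwards [nhdsWithin_le_nhds hnear, self_mem_nhdsWithin] with s hE hs
  exact mul_pos (rpow_pos_of_pos hs _) hE

lemma hasSum_fracRelaxation (hα : 0 < α) (ht : 0 < t) :
    HasSum (fun k : ℕ => (-1) ^ k * abelKernel (b + k * α) t) (fracRelaxation α b t) := by
  refine ((summable_pow_div_Gamma hα b _).hasSum.mul_left _).congr_fun fun k => ?_
  rw [abelKernel, show b + k * α - 1 = (b - 1) + α * k by ring, rpow_add ht, rpow_mul ht.le,
    rpow_natCast, neg_pow (t ^ α)]
  ring

lemma fracRelaxation_eq_sub (hα : 0 < α) (ht : 0 < t) :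
    fracRelaxation α b t = abelKernel b t - fracRelaxation α (α + b) t := by
  have htail := (hasSum_nat_add_iff' 1).2 (hasSum_fracRelaxation (b := b) hα ht)
  have hshift := (hasSum_fracRelaxation (b := α + b) hα ht).neg
  have heq := htail.unique (hshift.congr_fun fun k => ?_)
  · simp only [Finset.sum_range_one, pow_zero, Nat.cast_zero, zero_mul, add_zero, one_mul] at heq
    linarith
  · push_cast
    rw [show b + (k + 1) * α = α + b + k * α by ring]
    ring

lemma intervalIntegrable_abelKernel_mul_fracRelaxation (ha : 0 < a) (hα : 0 < α) (hb : 0 < b)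
    (ht : 0 < t) :
    IntervalIntegrable (fun s => abelKernel a (t - s) * fracRelaxation α b s) volume 0 t := by
  refine ((intervalIntegrable_abelKernel_mul_abelKernel ha hb ht).mul_continuousOn
    ((continuous_mittagLefflerTwo_neg_rpow (b := b) hα).const_mul (Gamma b)).continuousOn).congr
    fun s _ => ?_
  have := (Gamma_pos_of_pos hb).ne'
  simp only [abelKernel, fracRelaxation]
  field_simp

lemma integral_abelKernel_mul_fracRelaxation (ha : 0 < a) (hα : 0 < α) (hb : 0 < b)
    (ht : 0 < t) :
    ∫ s in 0..t, abelKernel a (t - s) * fracRelaxation α b s = fracRelaxation α (a + b) t := by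
  have hbk (k : ℕ) : 0 < b + k * α := by positivity
  let F (k : ℕ) (s : ℝ) : ℝ := abelKernel a (t - s) * abelKernel (b + k * α) s
  have hF (k : ℕ) : ∫ s in Ioc 0 t, F k s = abelKernel (a + b + k * α) t := by
    rw [← intervalIntegral.integral_of_le ht.le, add_assoc]
    exact integral_abelKernel_mul_abelKernel ha (hbk k) ht
  have hFint (k : ℕ) : IntegrableOn (fun s => (-1) ^ k * F k s) (Ioc 0 t) :=
    ((intervalIntegrable_abelKernel_mul_abelKernel ha (hbk k) ht).1).const_mul _
  have hFnorm (k : ℕ) : ∫ s in Ioc 0 t, ‖(-1) ^ k * F k s‖ = abelKernel (a + b + k * α) t := by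
    rw [← hF k, integral_Ioc_eq_integral_Ioo, integral_Ioc_eq_integral_Ioo]
    refine setIntegral_congr_fun measurableSet_Ioo fun s hs => ?_
    have hpos : 0 < F k s :=
      mul_pos (abelKernel_pos ha (sub_pos.2 hs.2)) (abelKernel_pos (hbk k) hs.1)
    simp [abs_of_pos hpos]
  have hsum := hasSum_fracRelaxation (b := a + b) hα ht
  have hnorm_summable : Summable fun k => ∫ s in Ioc 0 t, ‖(-1) ^ k * F k s‖ := by
    refine hsum.summable.abs.congr fun k => ?_
    rw [hFnorm, abs_mul, abs_neg_one_pow, one_mul, abs_of_pos (abelKernel_pos (by positivity) ht)]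
  have hswap := hasSum_integral_of_summable_integral_norm hFint hnorm_summable
  simp only [integral_const_mul, hF] at hswap
  rw [← hswap.unique hsum, intervalIntegral.integral_of_le ht.le]
  refine setIntegral_congr_fun measurableSet_Ioc fun s hs => ?_
  refine (((hasSum_fracRelaxation hα hs.1).mul_left (abelKernel a (t - s))).congr_fun
    fun k => ?_).tsum_eq.symm
  ring

theorem isVolterraSolution_fracRelaxation (hα : 0 < α) (hb : 0 < b) :
    IsVolterraSolution (abelKernel α) (abelKernel b) (fracRelaxation α b) where
  continuousOn := continuousOn_fracRelaxation hα
  intervalIntegrable _ ht := intervalIntegrable_abelKernel_mul_fracRelaxation hα hα hb ht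
  eq_sub_integral _ ht := by
    rw [integral_abelKernel_mul_fracRelaxation hα hα hb ht, fracRelaxation_eq_sub hα ht]

theorem fracRelaxation_pos (hα : 0 < α) (hα1 : α ≤ 1) (hb : α ≤ b) (ht : 0 < t) :
    0 < fracRelaxation α b t :=
  have hb0 : 0 < b := hα.trans_le hb
  (isVolterraSolution_fracRelaxation hα hb0).pos (fun _ hs => (abelKernel_pos hα hs).le)
    (fun _ _ => intervalIntegrable_abelKernel hα _ _) (fun _ hs => abelKernel_pos hb0 hs)
    continuousOn_abelKernel (fun _ hs => antitoneOn_abelKernel_sub_div_abelKernel hα hα1 hb hs)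
    (eventually_fracRelaxation_pos hα hb0) ht

lemma intervalIntegrable_fracRelaxation (hα : 0 < α) (hb : 0 < b) (ht : 0 < t) :
    IntervalIntegrable (fracRelaxation α b) volume 0 t := by
  simpa only [abelKernel_one, one_mul] using
    intervalIntegrable_abelKernel_mul_fracRelaxation one_pos hα hb ht

lemma fracRelaxation_one_eq_one_sub_integral (hα : 0 < α) (ht : 0 < t) :
    fracRelaxation α 1 t = 1 - ∫ s in 0..t, fracRelaxation α α s := by
  have hint := integral_abelKernel_mul_fracRelaxation one_pos hα hα ht
  simp only [abelKernel_one, one_mul] at hint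
  rw [hint, fracRelaxation_eq_sub hα ht, abelKernel_one, add_comm]

lemma antitoneOn_fracRelaxation_one (hα : 0 < α) (hα1 : α ≤ 1) :
    AntitoneOn (fracRelaxation α 1) (Ioi 0) := by
  intro s (hs : 0 < s) t (ht : 0 < t) hst
  rw [fracRelaxation_one_eq_one_sub_integral hα hs, fracRelaxation_one_eq_one_sub_integral hα ht]
  refine sub_le_sub_left (intervalIntegral.integral_mono_interval le_rfl hs.le hst ?_
    (intervalIntegrable_fracRelaxation hα hα ht)) 1
  filter_upwards [ae_restrict_mem measurableSet_Ioc] with r hr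
  exact (fracRelaxation_pos hα hα1 le_rfl hr.1).le

lemma fracRelaxation_one_le (hα : 0 < α) (hα1 : α ≤ 1) (ht : 0 < t) :
    fracRelaxation α 1 t ≤ (1 + t ^ α / Gamma (1 + α))⁻¹ := by
  have hle := (isVolterraSolution_fracRelaxation hα one_pos).integral_mul_le_sub
    (fun _ hs => (abelKernel_pos hα hs).le) (intervalIntegrable_abelKernel hα _ _)
    (antitoneOn_fracRelaxation_one hα hα1) ht
  rw [integral_abelKernel hα ht, abelKernel_one, abelKernel, add_sub_cancel_left] at hle
  have hden : 0 < 1 + t ^ α / Gamma (1 + α) :=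
    add_pos one_pos (div_pos (rpow_pos_of_pos ht _) (Gamma_pos_of_pos (by positivity)))
  rw [← one_div, le_div_iff₀ hden]
  linarith

end FracRelaxation

/-! ### Decay and integrability of the Mittag-Leffler function -/

section Decay

variable {α c r : ℝ}

lemma mittagLeffler_neg_eq_fracRelaxation (hα : 0 < α) (hr : 0 ≤ r) :
    mittagLeffler α (-r) = fracRelaxation α 1 (r ^ α⁻¹) := by
  rw [fracRelaxation_one, rpow_inv_rpow hr hα.ne']

theorem mittagLeffler_neg_pos (hα : 0 < α) (hα1 : α ≤ 1) (hr : 0 < r) :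
    0 < mittagLeffler α (-r) := by
  rw [mittagLeffler_neg_eq_fracRelaxation hα hr.le]
  exact fracRelaxation_pos hα hα1 hα1 (rpow_pos_of_pos hr _)

theorem mittagLeffler_neg_le (hα : 0 < α) (hα1 : α ≤ 1) (hr : 0 < r) :
    mittagLeffler α (-r) ≤ (1 + r / Gamma (1 + α))⁻¹ := by
  rw [mittagLeffler_neg_eq_fracRelaxation hα hr.le]
  simpa only [rpow_inv_rpow hr.le hα.ne'] using
    fracRelaxation_one_le hα hα1 (rpow_pos_of_pos hr α⁻¹)

theorem integrable_mittagLeffler_one_sub_sq_mul (hα : 0 < α) (hα1 : α ≤ 1) (hc : 0 < c) :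
    Integrable fun ξ : ℝ => mittagLeffler α ((1 - ξ ^ 2) * c) := by
  have hcont : Continuous fun ξ : ℝ => mittagLeffler α ((1 - ξ ^ 2) * c) :=
    (continuous_mittagLeffler hα).comp (by fun_prop)
  refine hcont.locallyIntegrable.integrable_of_isBigO_cocompact ?_
    (integrable_inv_one_add_sq.integrableAtFilter _)
  set d := c / Gamma (1 + α) with hd
  have hd0 : 0 < d := div_pos hc (Gamma_pos_of_pos (by positivity))
  set m := min (1 / 2) d
  have hm : 0 < m := lt_min one_half_pos hd0
  refine Asymptotics.IsBigO.of_bound m⁻¹ ?_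
  filter_upwards [(tendsto_norm_cocompact_atTop (E := ℝ)).eventually_gt_atTop 1] with ξ hξ
  have hξ2 : 1 < ξ ^ 2 := (one_lt_sq_iff_one_lt_abs ξ).2 hξ
  have hr : 0 < (ξ ^ 2 - 1) * c := mul_pos (sub_pos.2 hξ2) hc
  have hbound : m * (1 + ξ ^ 2) ≤ 1 + (ξ ^ 2 - 1) * c / Gamma (1 + α) := by
    rw [mul_div_assoc, ← hd]
    nlinarith [min_le_left (1 / 2) d, min_le_right (1 / 2) d]
  rw [show (1 - ξ ^ 2) * c = -((ξ ^ 2 - 1) * c) by ring,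
    norm_of_nonneg (mittagLeffler_neg_pos hα hα1 hr).le, norm_of_nonneg (by positivity),
    ← mul_inv]
  exact (mittagLeffler_neg_le hα hα1 hr).trans (inv_anti₀ (mul_pos hm (by positivity)) hbound)

end Decay

/-! ### Splitting the Fourier integral -/

lemma tendsto_sum_intervalIntegral_integral_Ioi {E : Type*} [NormedAddCommGroup E]
    [NormedSpace ℝ E] {f : ℝ → E} {p : ℕ → ℝ} (hf : IntegrableOn f (Ioi (p 0)))
    (hp : ∀ n, p 0 ≤ p n) (hlim : Tendsto p atTop atTop) :
    Tendsto (fun n => ∑ k ∈ Finset.range n, ∫ ξ in p k..p (k + 1), f ξ) atTop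
      (𝓝 (∫ ξ in Ioi (p 0), f ξ)) := by
  have hint (k : ℕ) : IntervalIntegrable f volume (p k) (p (k + 1)) :=
    intervalIntegrable_iff.2 (hf.mono_set fun _ hξ => (le_min (hp _) (hp _)).trans_lt hξ.1)
  simp only [intervalIntegral.sum_integral_adjacent_intervals fun k _ => hint k]
  exact intervalIntegral_tendsto_integral_Ioi _ hf hlim

/-- The endpoints of the intervals defining `aCoeff`: `0` followed by the positive zeros
`π(2n+1)/(2x)` of `ξ ↦ cos (xξ)`. -/
noncomputable def cosBreakpoint (x : ℝ) : ℕ → ℝ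
  | 0 => 0
  | n + 1 => π * (2 * n + 1) / (2 * x)

section CosBreakpoint

variable {x : ℝ}

lemma cosBreakpoint_nonneg (hx : 0 ≤ x) : ∀ n, 0 ≤ cosBreakpoint x n
  | 0 => le_rfl
  | n + 1 => by rw [cosBreakpoint]; positivity

lemma tendsto_cosBreakpoint (hx : 0 < x) : Tendsto (cosBreakpoint x) atTop atTop := by
  rw [← tendsto_add_atTop_iff_nat 1]
  refine Tendsto.atTop_div_const (by positivity) (Tendsto.const_mul_atTop pi_pos ?_)
  exact tendsto_atTop_add_const_right _ _ (tendsto_natCast_atTop_atTop.const_mul_atTop two_pos)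

end CosBreakpoint

lemma neg_one_pow_mul_aCoeff (α t x : ℝ) (k : ℕ) :
    (-1) ^ k * aCoeff α t x k = ∫ ξ in cosBreakpoint x k..cosBreakpoint x (k + 1),
      mittagLeffler α ((1 - ξ ^ 2) * t ^ α) * cos (x * ξ) := by
  cases k with
  | zero => simp [aCoeff, cosBreakpoint]
  | succ n =>
    rw [aCoeff, if_neg n.succ_ne_zero, ← mul_assoc, ← mul_pow, neg_one_mul, neg_neg, one_pow,
      one_mul, cosBreakpoint, cosBreakpoint, Nat.cast_succ,
      show 2 * ((n : ℝ) + 1) - 1 = 2 * n + 1 by ring]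

theorem integral_eq_alternating_sum (α t x : ℝ) (hα : 0 < α) (hα1 : α < 1) (ht : 0 < t)
    (hx : 0 < x) :
    IntegrableOn (fun ξ : ℝ => mittagLeffler α ((1 - ξ ^ 2) * t ^ α) * Real.cos (x * ξ))
      (Set.Ioi 0) ∧
    ∃ S : ℝ,
      Filter.Tendsto (fun n : ℕ => ∑ k ∈ Finset.range n, (-1 : ℝ) ^ k * aCoeff α t x k)
        Filter.atTop (nhds S) ∧
      (∫ ξ in Set.Ioi (0 : ℝ),
          mittagLeffler α ((1 - ξ ^ 2) * t ^ α) * Real.cos (x * ξ)) = S := by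
  have hint : IntegrableOn (fun ξ => mittagLeffler α ((1 - ξ ^ 2) * t ^ α) * cos (x * ξ))
      (Ioi 0) :=
    ((integrable_mittagLeffler_one_sub_sq_mul hα hα1.le (rpow_pos_of_pos ht α)).mul_bdd
      (by fun_prop) (ae_of_all _ fun ξ => abs_cos_le_one (x * ξ))).integrableOn
  refine ⟨hint, _, ?_, rfl⟩
  simp only [neg_one_pow_mul_aCoeff]
  exact tendsto_sum_intervalIntegral_integral_Ioi (p := cosBreakpoint x) hint
    (cosBreakpoint_nonneg hx.le) (tendsto_cosBreakpoint hx)
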